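/- Let r0 = r1 = 2 and let (T^-, T^+, σ) be a primitive semi-standard linked tableaux pair for the generalized Kronecker quiver. Fix a box B in the first row of T^- whose label has second entry 1, and suppose B is the j-th such box from the left. Let s be the number of boxes in the second row of T^- whose labels have second entry 2 and which lie in a column strictly to the left of the column of B; set t = j − s; let y be the number of boxes in the first row of T^- whose labels have second entry 2 and which lie strictly to the left of B; and let x be the number of boxes in the first row of T^+ whose labels have second entry 2 and which lie strictly to the left of the box of T^+ corresponding to B under the link. Then t > 0 and |x − y| < t. -/

import Mathlib

namespace QuiverSAGBI

/-- The variable `x^i_{jk}`: the `(j,k)` entry of the generic matrix `M_i`. -/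
abbrev KVar (K r0 r1 : ℕ) := Fin K × Fin r1 × Fin r0

/-- The coordinate ring of the representation space of the generalized
Kronecker quiver with `K` arrows and dimension vector `(r0, r1)`. -/
abbrev KPoly (K r0 r1 : ℕ) := MvPolynomial (KVar K r0 r1) ℂ

/-- `x_v` is a greater variable than `x_w`:  `v.1 < w.1`, or `v.1 = w.1` and
`v.2.1 < w.2.1`, or these agree and `v.2.2 < w.2.2`. -/
def VarGT {K r0 r1 : ℕ} (v w : KVar K r0 r1) : Prop :=
  v.1 < w.1 ∨ (v.1 = w.1 ∧ (v.2.1 < w.2.1 ∨ (v.2.1 = w.2.1 ∧ v.2.2 < w.2.2)))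

/-- The monomial with exponent vector `a` is smaller than the one with exponent
vector `b` in the lexicographic term order: at the most significant variable
where they differ, `a` has the smaller exponent. -/
def MonLT {K r0 r1 : ℕ} (a b : KVar K r0 r1 →₀ ℕ) : Prop :=
  ∃ v, a v < b v ∧ ∀ w, VarGT w v → a w = b w

/-- `mo` is the leading monomial (exponent vector) of `f`. -/
def IsLM {K r0 r1 : ℕ} (f : KPoly K r0 r1) (mo : KVar K r0 r1 →₀ ℕ) : Prop :=
  mo ∈ f.support ∧ ∀ m' ∈ f.support, m' = mo ∨ MonLT m' mo

/-- The substitution action of a pair of matrices `(g, h)` on the coordinate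
ring: `x^i_{jk} ↦ ∑ (h⁻¹)_{j j'} x^i_{j'k'} g_{k' k}`, i.e. `M_i ↦ h⁻¹ M_i g`. -/
noncomputable def glAct {K r0 r1 : ℕ} (g : Matrix (Fin r0) (Fin r0) ℂ)
    (h : Matrix (Fin r1) (Fin r1) ℂ) : KPoly K r0 r1 →ₐ[ℂ] KPoly K r0 r1 :=
  MvPolynomial.aeval fun v : KVar K r0 r1 =>
    ∑ j' : Fin r1, ∑ k' : Fin r0,
      MvPolynomial.C (h⁻¹ v.2.1 j' * g k' v.2.2) * MvPolynomial.X (v.1, j', k')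

/-- `f` is a semi-invariant of weight `(w0, w1)`. -/
def IsSemiInvariant {K r0 r1 : ℕ} (f : KPoly K r0 r1) (w0 w1 : ℤ) : Prop :=
  ∀ (g : Matrix (Fin r0) (Fin r0) ℂ) (h : Matrix (Fin r1) (Fin r1) ℂ),
    IsUnit g.det → IsUnit h.det →
      glAct g h f = MvPolynomial.C (g.det ^ w0 * h.det ^ w1) * f

/-- The semi-invariant ring: the linear span of all semi-invariants. -/
noncomputable def semiInvariantRing (K r0 r1 : ℕ) : Submodule ℂ (KPoly K r0 r1) :=
  Submodule.span ℂ {f | ∃ w0 w1 : ℤ, IsSemiInvariant f w0 w1}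

/-- A linked tableaux pair for the generalized Kronecker quiver:
`Tm` is the tableau `T⁻` (with `r0` rows and `cm` columns, labels `(i,q)`),
`Tp` is the tableau `T⁺` (with `r1` rows and `cp` columns, labels `(i,p)`),
and `link` is a bijection of boxes sending the box labeled `(i,q)` in row `p`
of `T⁻` to a box labeled `(i,p)` lying in row `q` of `T⁺`. -/
structure LinkedPair (K r0 r1 cm cp : ℕ) where
  Tm : Fin r0 → Fin cm → Fin K × Fin r1
  Tp : Fin r1 → Fin cp → Fin K × Fin r0
  link : Fin r0 × Fin cm ≃ Fin r1 × Fin cp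
  link_row : ∀ p c, (link (p, c)).1 = (Tm p c).2
  link_label : ∀ p c, Tp (link (p, c)).1 (link (p, c)).2 = ((Tm p c).1, p)

/-- The exponent vector of `Mon(T⁺)`: a box labeled `(i,k)` in row `q` of `T⁺`
contributes the variable `x^i_{qk}`. -/
noncomputable def monExpP {K r0 r1 cm cp : ℕ} (L : LinkedPair K r0 r1 cm cp) :
    KVar K r0 r1 →₀ ℕ :=
  ∑ q : Fin r1, ∑ c : Fin cp, Finsupp.single ((L.Tp q c).1, q, (L.Tp q c).2) 1

/-- The exponent vector of `Mon(T⁻)`: a box labeled `(i,j)` in row `p` of `T⁻`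
contributes the variable `x^i_{jp}`. -/
noncomputable def monExpM {K r0 r1 cm cp : ℕ} (L : LinkedPair K r0 r1 cm cp) :
    KVar K r0 r1 →₀ ℕ :=
  ∑ p : Fin r0, ∑ c : Fin cm, Finsupp.single ((L.Tm p c).1, (L.Tm p c).2, p) 1

/-- The semi-invariant `f_{T^±}` attached to a linked tableaux pair:
`∑_{α⁻, α⁺} sign(α⁻) sign(α⁺) Mon(α⁻ · α⁺ · T⁺)`, where `α⁺` permutes the
entries of each column of `T⁺` among its rows and `α⁻` permutes the second
entries of the labels of the boxes of `T⁺` linked to each column of `T⁻`. -/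
noncomputable def pairPoly {K r0 r1 cm cp : ℕ} (L : LinkedPair K r0 r1 cm cp) :
    KPoly K r0 r1 :=
  ∑ αm : Fin cm → Equiv.Perm (Fin r0), ∑ αp : Fin cp → Equiv.Perm (Fin r1),
    ((∏ l, (Equiv.Perm.sign (αm l) : ℤ)) * ∏ c, (Equiv.Perm.sign (αp c) : ℤ)) •
      ∏ p : Fin r0, ∏ l : Fin cm,
        MvPolynomial.X
          ((L.Tm p l).1, αp (L.link (p, l)).2 (L.link (p, l)).1, αm l p)

/-- The order on labels: `(i,p) ≤ (j,q)` iff `i < j`, or `i = j` and `p ≤ q`. -/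
def LabelLE {K n : ℕ} (a b : Fin K × Fin n) : Prop :=
  a.1 < b.1 ∨ (a.1 = b.1 ∧ a.2 ≤ b.2)

/-- Strict version of the label order. -/
def LabelLT {K n : ℕ} (a b : Fin K × Fin n) : Prop :=
  a.1 < b.1 ∨ (a.1 = b.1 ∧ a.2 < b.2)

/-- A rectangular tableau is semi-standard if its entries are weakly increasing
along each row and strictly increasing down each column. -/
def IsSemiStandardTab {rows cols K n : ℕ}
    (T : Fin rows → Fin cols → Fin K × Fin n) : Prop :=
  (∀ (i : Fin rows) (c c' : Fin cols), c ≤ c' → LabelLE (T i c) (T i c')) ∧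
  (∀ (c : Fin cols) (i i' : Fin rows), i < i' → LabelLT (T i c) (T i' c))

/-- The link is semi-standard: boxes with equal labels in the same row of `T⁻`
are matched with their partners in `T⁺` in a left-to-right
order-preserving way. -/
def IsSemiStandardLink {K r0 r1 cm cp : ℕ}
    (L : LinkedPair K r0 r1 cm cp) : Prop :=
  ∀ (p : Fin r0) (c c' : Fin cm), L.Tm p c = L.Tm p c' → c < c' →
    (L.link (p, c)).2 < (L.link (p, c')).2

/-- A semi-standard linked tableaux pair: both tableaux and the link are
semi-standard. -/
def IsSemiStandardPair {K r0 r1 cm cp : ℕ}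
    (L : LinkedPair K r0 r1 cm cp) : Prop :=
  IsSemiStandardTab L.Tm ∧ IsSemiStandardTab L.Tp ∧ IsSemiStandardLink L

/-- A (nonempty) semi-standard linked tableaux pair is primitive if its leading
monomial is not the product of the leading monomials of two (nonempty)
semi-standard linked tableaux pairs. -/
def IsPrimitive {K r0 r1 cm cp : ℕ} (L : LinkedPair K r0 r1 cm cp) : Prop :=
  IsSemiStandardPair L ∧ 0 < cm ∧
    ¬∃ (cm1 cp1 cm2 cp2 : ℕ) (L1 : LinkedPair K r0 r1 cm1 cp1)
        (L2 : LinkedPair K r0 r1 cm2 cp2) (m m1 m2 : KVar K r0 r1 →₀ ℕ),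
        0 < cm1 ∧ 0 < cm2 ∧ IsSemiStandardPair L1 ∧ IsSemiStandardPair L2 ∧
        IsLM (pairPoly L) m ∧ IsLM (pairPoly L1) m1 ∧ IsLM (pairPoly L2) m2 ∧
        m = m1 + m2


/-! ### Part A: leading monomials -/

/-- Swap the roles of the two tableaux. -/
def LinkedPair.dual {K r0 r1 cm cp : ℕ} (L : LinkedPair K r0 r1 cm cp) :
    LinkedPair K r1 r0 cp cm where
  Tm := L.Tp
  Tp := L.Tm
  link := L.link.symm
  link_row := by
    intro q c
    obtain ⟨⟨p, l⟩, h⟩ := L.link.surjective (q, c)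
    have h2 := L.link_label p l
    rw [← h, Equiv.symm_apply_apply]
    rw [h] at h2
    simp only at h2
    rw [h2]
  link_label := by
    intro q c
    obtain ⟨⟨p, l⟩, h⟩ := L.link.surjective (q, c)
    have h1 := L.link_row p l
    have h2 := L.link_label p l
    rw [← h, Equiv.symm_apply_apply]
    rw [h] at h1 h2
    simp only at h1 h2 ⊢
    rw [h2, h1]

/-- number of boxes of `T⁺` in column `c` with new matrix/row/column data `(i,q,k)`. -/
def colCnt {K cm cp : ℕ} (L : LinkedPair K 2 2 cm cp)
    (αm : Fin cm → Equiv.Perm (Fin 2)) (αp : Fin cp → Equiv.Perm (Fin 2))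
    (v : KVar K 2 2) (c : Fin cp) : ℕ :=
  ∑ q : Fin 2, if ((L.Tp q c).1, αp c q, αm (L.link.symm (q, c)).2 (L.Tp q c).2) = v then 1 else 0

/-- The exponent vector of the term indexed by `αm, αp`. -/
noncomputable def termExp {K cm cp : ℕ} (L : LinkedPair K 2 2 cm cp)
    (αm : Fin cm → Equiv.Perm (Fin 2)) (αp : Fin cp → Equiv.Perm (Fin 2)) : KVar K 2 2 →₀ ℕ :=
  ∑ p : Fin 2, ∑ l : Fin cm, Finsupp.single
    ((L.Tm p l).1, αp (L.link (p, l)).2 (L.link (p, l)).1, αm l p) 1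

theorem termExp_apply {K cm cp : ℕ} (L : LinkedPair K 2 2 cm cp)
    (αm : Fin cm → Equiv.Perm (Fin 2)) (αp : Fin cp → Equiv.Perm (Fin 2)) (v : KVar K 2 2) :
    termExp L αm αp v = ∑ c, colCnt L αm αp v c := by
  unfold termExp colCnt
  rw [Finset.sum_comm' (t' := Finset.univ) (s' := fun _ => Finset.univ) (by simp)]
  rw [← Finset.sum_product' , ← Finset.sum_product', Finset.univ_product_univ,
    Finset.univ_product_univ, Finsupp.finsetSum_apply]
  have e : Fin cm × Fin 2 ≃ Fin cp × Fin 2 :=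
    (Equiv.prodComm _ _).trans (L.link.trans (Equiv.prodComm _ _))
  refine Fintype.sum_equiv ((Equiv.prodComm _ _).trans (L.link.trans (Equiv.prodComm _ _))) _ _ ?_
  rintro ⟨l, p⟩
  have h2 := L.link_label p l
  simp only [Equiv.trans_apply, Equiv.prodComm_apply, Prod.swap, Finsupp.single_apply, h2,
    Prod.mk.eta, Equiv.symm_apply_apply]

theorem termExp_dual {K cm cp : ℕ} (L : LinkedPair K 2 2 cm cp)
    (αm : Fin cm → Equiv.Perm (Fin 2)) (αp : Fin cp → Equiv.Perm (Fin 2)) (i : Fin K) (q k : Fin 2) :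
    termExp L αm αp (i, q, k) = termExp L.dual αp αm (i, k, q) := by
  rw [termExp_apply]
  unfold termExp colCnt
  rw [Finset.sum_comm, Finsupp.finsetSum_apply]
  refine Finset.sum_congr rfl fun x _ => ?_
  rw [Finsupp.finsetSum_apply]
  refine Finset.sum_congr rfl fun c _ => ?_
  have := L.dual.link_row x c
  simp only [LinkedPair.dual] at this ⊢
  rw [this]
  simp only [Finsupp.single_apply, Prod.mk.injEq]
  congr 1
  simp only [eq_iff_iff]
  tauto

theorem perm2 (σ : Equiv.Perm (Fin 2)) :
    (σ 0 = 0 ∧ σ 1 = 1 ∧ Equiv.Perm.sign σ = 1) ∨ (σ 0 = 1 ∧ σ 1 = 0) := by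
  revert σ; decide

/-- column strictness for two rows. -/
def ColStrict {cols K : ℕ} (T : Fin 2 → Fin cols → Fin K × Fin 2) : Prop :=
  ∀ c, LabelLT (T 0 c) (T 1 c)

/-- no swapped column of `T⁺` with top matrix `< i` straddles. -/
def NoStr {cols K : ℕ} (T : Fin 2 → Fin cols → Fin K × Fin 2)
    (α : Fin cols → Equiv.Perm (Fin 2)) (i : Fin K) : Prop :=
  ∀ c, α c 0 = 1 → (T 0 c).1 < i → (T 1 c).1 = (T 0 c).1

theorem fin2 (x : Fin 2) : x = 0 ∨ x = 1 := by omega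

/-- Row marginals. -/
theorem rowMarg_le {K cm cp : ℕ} (L : LinkedPair K 2 2 cm cp) (hc : ColStrict L.Tp)
    (αm : Fin cm → Equiv.Perm (Fin 2)) (αp : Fin cp → Equiv.Perm (Fin 2)) (i : Fin K)
    (hs : NoStr L.Tp αp i) :
    termExp L αm αp (i, 0, 0) + termExp L αm αp (i, 0, 1) ≤
      termExp L 1 1 (i, 0, 0) + termExp L 1 1 (i, 0, 1) ∧
    (termExp L αm αp (i, 0, 0) + termExp L αm αp (i, 0, 1) =
      termExp L 1 1 (i, 0, 0) + termExp L 1 1 (i, 0, 1) → 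
        ∀ c, αp c 0 = 1 → (L.Tp 0 c).1 = i → (L.Tp 1 c).1 = (L.Tp 0 c).1) := by
  simp only [termExp_apply, ← Finset.sum_add_distrib]
  have key : ∀ c, colCnt L αm αp (i, 0, 0) c + colCnt L αm αp (i, 0, 1) c ≤
      colCnt L 1 1 (i, 0, 0) c + colCnt L 1 1 (i, 0, 1) c ∧ 
      (colCnt L αm αp (i, 0, 0) c + colCnt L αm αp (i, 0, 1) c =
      colCnt L 1 1 (i, 0, 0) c + colCnt L 1 1 (i, 0, 1) c →  αp c 0 = 1 →
        (L.Tp 0 c).1 = i → (L.Tp 1 c).1 = (L.Tp 0 c).1) := by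
    intro c
    have h1 := hc c
    have h2 := hs c
    unfold LabelLT at h1
    simp only [colCnt, Fin.sum_univ_two, Prod.mk.injEq, Pi.one_apply, Equiv.Perm.one_apply]
    generalize αm (L.link.symm (0, c)).2 (L.Tp 0 c).2 = a
    generalize αm (L.link.symm (1, c)).2 (L.Tp 1 c).2 = b
    generalize (L.Tp 0 c).2 = a' at *
    generalize (L.Tp 1 c).2 = b' at *
    generalize (L.Tp 1 c).1 = j1 at *
    generalize (L.Tp 0 c).1 = j0 at *
    rcases perm2 (αp c) with ⟨h3, h4, -⟩ | ⟨h3, h4⟩ <;> simp only [h3, h4] at * <;>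
    rcases fin2 a with rfl | rfl <;> rcases fin2 b with rfl | rfl <;>
      rcases fin2 a' with rfl | rfl <;> rcases fin2 b' with rfl | rfl <;> simp at h1 h2 ⊢ <;>
      grind
  refine ⟨Finset.sum_le_sum fun c _ => (key c).1, fun h c => ?_⟩
  exact (key c).2 ((Finset.sum_eq_sum_iff_of_le fun c _ => (key c).1).1 h c (Finset.mem_univ _))

theorem noStr_of {K cm cp : ℕ} (L : LinkedPair K 2 2 cm cp) (hc : ColStrict L.Tp)
    (αm : Fin cm → Equiv.Perm (Fin 2)) (αp : Fin cp → Equiv.Perm (Fin 2)) (i : Fin K)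
    (hg : ∀ i' < i, ∀ q k, termExp L αm αp (i', q, k) = termExp L 1 1 (i', q, k)) :
    NoStr L.Tp αp i := by
  induction i using WellFoundedLT.induction with
  | _ i ih =>
    intro c h1 h2
    refine (rowMarg_le L hc αm αp (L.Tp 0 c).1 (ih _ h2 fun i' hi' => hg i' (hi'.trans h2))).2 ?_
      c h1 rfl
    rw [hg _ h2, hg _ h2]

theorem zz_le {K cm cp : ℕ} (L : LinkedPair K 2 2 cm cp) (hc : ColStrict L.Tp)
    (hc' : ColStrict L.Tm)
    (αm : Fin cm → Equiv.Perm (Fin 2)) (αp : Fin cp → Equiv.Perm (Fin 2)) (i : Fin K)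
    (hs : NoStr L.Tp αp i) (hs' : NoStr L.Tm αm i) :
    termExp L αm αp (i, 0, 0) ≤ termExp L 1 1 (i, 0, 0) ∧
    (termExp L αm αp (i, 0, 0) = termExp L 1 1 (i, 0, 0) →
        ∀ c, L.Tp 0 c = (i, 0) → αp c 0 = 0 → αm (L.link.symm (0, c)).2 0 = 0) := by
  simp only [termExp_apply]
  have key : ∀ c, colCnt L αm αp (i, 0, 0) c ≤ colCnt L 1 1 (i, 0, 0) c ∧
      (colCnt L αm αp (i, 0, 0) c = colCnt L 1 1 (i, 0, 0) c →
        L.Tp 0 c = (i, 0) → αp c 0 = 0 → αm (L.link.symm (0, c)).2 0 = 0) := by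
    intro c
    have h1 := hc c
    have h2 := hs c
    have hU : L.Tp 0 c = (i, 1) → αm (L.link.symm (0, c)).2 1 ≠ 0 := by
      intro h h'
      have e1 := L.dual.link_row 0 c
      have e2 := L.dual.link_label 0 c
      simp only [LinkedPair.dual] at e1 e2
      rw [e1, h] at e2
      simp only at e2
      have e3 := hc' (L.link.symm (0, c)).2
      have e4 := hs' (L.link.symm (0, c)).2
      rw [e2] at e3 e4
      unfold LabelLT at e3
      rcases perm2 (αm (L.link.symm (0, c)).2) with h | h <;> simp_all
    unfold LabelLT at h1
    simp only [colCnt, Fin.sum_univ_two, Prod.mk.injEq, Pi.one_apply, Equiv.Perm.one_apply]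
    have e0 : L.Tp 0 c = ((L.Tp 0 c).1, (L.Tp 0 c).2) := rfl
    rw [e0] at hU ⊢
    generalize αm (L.link.symm (0, c)).2 = a at *
    generalize αm (L.link.symm (1, c)).2 = b at *
    generalize (L.Tp 0 c).2 = a' at *
    generalize (L.Tp 1 c).2 = b' at *
    generalize (L.Tp 1 c).1 = j1 at *
    generalize (L.Tp 0 c).1 = j0 at *
    clear e0
    rcases perm2 (αp c) with ⟨h3, h4, -⟩ | ⟨h3, h4⟩ <;> simp only [h3, h4] at * <;>
    rcases fin2 a' with rfl | rfl <;> rcases fin2 b' with rfl | rfl <;> 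
    rcases perm2 a with ⟨h5, h6, -⟩ | ⟨h5, h6⟩ <;> rcases perm2 b with ⟨h7, h8, -⟩ | ⟨h7, h8⟩ <;>
     simp [h5, h6, h7, h8] at h1 h2 hU ⊢ <;>
      grind
  refine ⟨Finset.sum_le_sum fun c _ => (key c).1, fun h c => ?_⟩
  exact (key c).2 ((Finset.sum_eq_sum_iff_of_le fun c _ => (key c).1).1 h c (Finset.mem_univ _))

theorem tot_eq {K cm cp : ℕ} (L : LinkedPair K 2 2 cm cp) 
    (αm : Fin cm → Equiv.Perm (Fin 2)) (αp : Fin cp → Equiv.Perm (Fin 2)) (i : Fin K) :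
    termExp L αm αp (i, 0, 0) + termExp L αm αp (i, 0, 1) +
      termExp L αm αp (i, 1, 0) + termExp L αm αp (i, 1, 1) =
    termExp L 1 1 (i, 0, 0) + termExp L 1 1 (i, 0, 1) +
      termExp L 1 1 (i, 1, 0) + termExp L 1 1 (i, 1, 1) := by
  simp only [termExp_apply, ← Finset.sum_add_distrib]
  refine Finset.sum_congr rfl fun c _ => ?_
  simp only [colCnt, Fin.sum_univ_two, Prod.mk.injEq, Pi.one_apply, Equiv.Perm.one_apply]
  generalize αm (L.link.symm (0, c)).2 (L.Tp 0 c).2 = a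
  generalize αm (L.link.symm (1, c)).2 (L.Tp 1 c).2 = b
  generalize (L.Tp 0 c).2 = a' at *
  generalize (L.Tp 1 c).2 = b' at *
  generalize αp c 0 = a1
  generalize αp c 1 = b1
  rcases fin2 a with rfl | rfl <;> rcases fin2 b with rfl | rfl <;>
      rcases fin2 a' with rfl | rfl <;> rcases fin2 b' with rfl | rfl <;> 
      rcases fin2 a1 with rfl | rfl <;> rcases fin2 b1 with rfl | rfl <;> simp <;> omega

theorem term_le {K cm cp : ℕ} (L : LinkedPair K 2 2 cm cp) (hc : ColStrict L.Tp)
    (hc' : ColStrict L.Tm)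
    (αm : Fin cm → Equiv.Perm (Fin 2)) (αp : Fin cp → Equiv.Perm (Fin 2)) :
    termExp L αm αp = termExp L 1 1 ∨ MonLT (termExp L αm αp) (termExp L 1 1) := by
  by_cases h : ∀ i : Fin K, ∀ q k, termExp L αm αp (i, q, k) = termExp L 1 1 (i, q, k)
  · left; ext ⟨i, q, k⟩; exact h i q k
  right
  push Not at h
  obtain ⟨i, hi, hmin⟩ := WellFounded.has_min (wellFounded_lt (α := Fin K))
    {i | ∃ q k, termExp L αm αp (i, q, k) ≠ termExp L 1 1 (i, q, k)} h
  have hg : ∀ i' < i, ∀ q k, termExp L αm αp (i', q, k) = termExp L 1 1 (i', q, k) := by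
    intro i' hi' q k
    by_contra hne
    exact hmin i' ⟨q, k, hne⟩ hi'
  have hs := noStr_of L hc αm αp i hg
  have hs' := noStr_of L.dual hc' αp αm i (by
    intro i' hi' q k
    rw [← termExp_dual, hg i' hi', termExp_dual])
  have z := (zz_le L hc hc' αm αp i hs hs').1
  have r := (rowMarg_le L hc αm αp i hs).1
  have r' := (rowMarg_le L.dual hc' αp αm i hs').1
  simp only [← termExp_dual] at r'
  have t := tot_eq L αm αp i
  have low : ∀ w : KVar K 2 2, w.1 < i → termExp L αm αp w = termExp L 1 1 w := by
    rintro ⟨i', q, k⟩ h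
    exact hg i' h q k
  have case0 : ∀ q k, termExp L αm αp (i, q, k) < termExp L 1 1 (i, q, k) →
     (∀ q' k', q' < q ∨ q' = q ∧ k' < k → termExp L αm αp (i, q', k') = termExp L 1 1 (i, q', k')) →
     MonLT (termExp L αm αp) (termExp L 1 1) := by
    intro q k h1 h2
    refine ⟨(i, q, k), h1, ?_⟩
    rintro ⟨i', q', k'⟩ (h | ⟨h, h'⟩)
    · exact low _ h
    · simp only at h h'
      subst h
      exact h2 q' k' h'
  by_cases e1 : termExp L αm αp (i, 0, 0) = termExp L 1 1 (i, 0, 0)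
  · by_cases e2 : termExp L αm αp (i, 0, 1) = termExp L 1 1 (i, 0, 1)
    · by_cases e3 : termExp L αm αp (i, 1, 0) = termExp L 1 1 (i, 1, 0)
      · exfalso
        obtain ⟨q, k, hne⟩ := hi
        apply hne
        rcases fin2 q with rfl | rfl <;> rcases fin2 k with rfl | rfl <;> omega
      · apply case0 1 0 (by omega)
        intro q k h
        rcases fin2 q with rfl | rfl <;> rcases fin2 k with rfl | rfl <;>
        first | exact e1 | exact e2 | exact e3 | (exfalso; revert h; decide)
    · apply case0 0 1 (by omega)
      intro q k h
      rcases fin2 q with rfl | rfl <;> rcases fin2 k with rfl | rfl <;>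
        first | exact e1 | exact e2 | exact e3 | (exfalso; revert h; decide)
  · apply case0 0 0 (by omega)
    intro q k h
    rcases fin2 q with rfl | rfl <;> rcases fin2 k with rfl | rfl <;>
        first | exact e1 | exact e2 | exact e3 | (exfalso; revert h; decide)

theorem sign_one {K cm cp : ℕ} (L : LinkedPair K 2 2 cm cp) (hc : ColStrict L.Tp)
    (hc' : ColStrict L.Tm)
    (αm : Fin cm → Equiv.Perm (Fin 2)) (αp : Fin cp → Equiv.Perm (Fin 2))
    (h : termExp L αm αp = termExp L 1 1) :
    (∏ l, (Equiv.Perm.sign (αm l) : ℤ)) * ∏ c, (Equiv.Perm.sign (αp c) : ℤ) = 1 := by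
  have hs : ∀ i, NoStr L.Tp αp i := fun i => noStr_of L hc αm αp i (by rw [h]; simp)
  have hs' : ∀ i, NoStr L.Tm αm i := fun i => noStr_of L.dual hc' αp αm i (by
    intro i' hi' q k
    rw [← termExp_dual, h, termExp_dual])
  have hst : ∀ c, αp c 0 = 1 → (L.Tp 1 c).1 = (L.Tp 0 c).1 := fun c hc1 =>
    (rowMarg_le L hc αm αp (L.Tp 0 c).1 (hs _)).2 (by rw [h]) c hc1 rfl
  have hst' : ∀ c, αm c 0 = 1 → (L.Tm 1 c).1 = (L.Tm 0 c).1 := fun c hc1 =>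
    (rowMarg_le L.dual hc' αp αm (L.Tm 0 c).1 (hs' _)).2
      (by simp only [← termExp_dual]; rw [h]) c hc1 rfl
  have z : ∀ c, (L.Tp 0 c).2 = 0 → αp c 0 = 0 → αm (L.link.symm (0, c)).2 0 = 0 := fun c hc0 =>
    (zz_le L hc hc' αm αp (L.Tp 0 c).1 (hs _) (hs' _)).2 (by rw [h]) c (Prod.ext rfl hc0)
  have z' : ∀ c, (L.Tm 0 c).2 = 0 → αm c 0 = 0 → αp (L.link (0, c)).2 0 = 0 := fun c hc0 =>
    (zz_le L.dual hc' hc αp αm (L.Tm 0 c).1 (hs' _) (hs _)).2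
      (by simp only [← termExp_dual]; rw [h]) c (Prod.ext rfl hc0)
  have pm : ∏ l, (Equiv.Perm.sign (αm l) : ℤ) =
      ∏ l with (L.Tm 0 l).2 = 0, (Equiv.Perm.sign (αm l) : ℤ) := by
    symm
    apply Finset.prod_subset (Finset.subset_univ _)
    intro l _ hl
    rcases perm2 (αm l) with h1 | h1
    · simp [h1]
    · exfalso
      have h2 := hst' l h1.1
      have h3 := hc' l
      unfold LabelLT at h3
      simp at hl
      rcases h3 with h3 | ⟨-, h3⟩
      · exact absurd h2 (ne_of_gt h3)
      · omega
  have pp : ∏ l, (Equiv.Perm.sign (αp l) : ℤ) =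
      ∏ l with (L.Tp 0 l).2 = 0, (Equiv.Perm.sign (αp l) : ℤ) := by
    symm
    apply Finset.prod_subset (Finset.subset_univ _)
    intro l _ hl
    rcases perm2 (αp l) with h1 | h1
    · simp [h1]
    · exfalso
      have h2 := hst l h1.1
      have h3 := hc l
      unfold LabelLT at h3
      simp at hl
      rcases h3 with h3 | ⟨-, h3⟩
      · exact absurd h2 (ne_of_gt h3)
      · omega
  have f1 : ∀ l, (L.Tm 0 l).2 = 0 → L.link (0, l) = (0, (L.link (0, l)).2) := by
    intro l hl
    have := L.link_row 0 l
    ext1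
    · rw [this, hl]
    · rfl
  have f2 : ∀ l, (L.Tp 0 l).2 = 0 → L.link.symm (0, l) = (0, (L.link.symm (0, l)).2) := by
    intro l hl
    have := L.dual.link_row 0 l
    ext1
    · exact this.trans hl
    · rfl
  have eqv : ∏ l with (L.Tm 0 l).2 = 0, (Equiv.Perm.sign (αm l) : ℤ) =
      ∏ l with (L.Tp 0 l).2 = 0, (Equiv.Perm.sign (αp l) : ℤ) := by
    refine Finset.prod_bij' (fun l _ => (L.link (0, l)).2) (fun c _ => (L.link.symm (0, c)).2)
      ?_ ?_ ?_ ?_ ?_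
    · intro l hl
      simp only [Finset.mem_filter, Finset.mem_univ, true_and] at hl ⊢
      have h2 := L.link_label 0 l
      rw [f1 l hl] at h2
      rw [h2]
    · intro l hl
      simp only [Finset.mem_filter, Finset.mem_univ, true_and] at hl ⊢
      have h2 := L.dual.link_label 0 l
      simp only [LinkedPair.dual] at h2
      rw [f2 l hl] at h2
      rw [h2]
    · intro l hl
      simp only [Finset.mem_filter, Finset.mem_univ, true_and] at hl ⊢
      rw [← f1 l hl]; simp
    · intro l hl
      simp only [Finset.mem_filter, Finset.mem_univ, true_and] at hl ⊢
      rw [← f2 l hl]; simp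
    · intro l hl
      simp only [Finset.mem_filter, Finset.mem_univ, true_and] at hl ⊢
      have g1 := z' l hl
      have g2 : αp (L.link (0, l)).2 0 = 0 → αm l 0 = 0 := by
        intro h0
        have h2 := L.link_label 0 l
        rw [f1 l hl] at h2
        have := z (L.link (0, l)).2 (by rw [h2]) h0
        rw [← f1 l hl] at this
        simpa using this
      congr 2
      have ext2 : ∀ σ τ : Equiv.Perm (Fin 2), (σ 0 = 0 → τ 0 = 0) → (τ 0 = 0 → σ 0 = 0) →
        σ = τ := by decide
      exact ext2 _ _ g1 g2
  rw [pm, pp, eqv, ← Finset.prod_mul_distrib]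
  apply Finset.prod_eq_one
  intro c _
  rcases Int.units_eq_one_or (Equiv.Perm.sign (αp c)) with h | h <;> rw [h] <;> rfl

theorem isLM_pair {K cm cp : ℕ} (L : LinkedPair K 2 2 cm cp) (hc : ColStrict L.Tp)
    (hc' : ColStrict L.Tm) : IsLM (pairPoly L) (termExp L 1 1) := by
  have expand : pairPoly L = ∑ αm : Fin cm → Equiv.Perm (Fin 2),
      ∑ αp : Fin cp → Equiv.Perm (Fin 2),
      MvPolynomial.monomial (termExp L αm αp) (((((∏ l, (Equiv.Perm.sign (αm l) : ℤ)) *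
        ∏ c, (Equiv.Perm.sign (αp c) : ℤ)) : ℤ) : ℂ)) := by
    unfold pairPoly
    refine Finset.sum_congr rfl fun αm _ => Finset.sum_congr rfl fun αp _ => ?_
    have : MvPolynomial.monomial (termExp L αm αp) (1:ℂ) = ∏ p : Fin 2, ∏ l : Fin cm,
        MvPolynomial.X
          ((L.Tm p l).1, αp (L.link (p, l)).2 (L.link (p, l)).1, αm l p) := by
      unfold termExp
      simp only [MvPolynomial.monomial_sum_one, MvPolynomial.X]
    rw [← this]
    rw [← Int.cast_smul_eq_zsmul ℂ, MvPolynomial.smul_monomial]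
    simp
  have coeff : ∀ m, (pairPoly L).coeff m = ∑ αm : Fin cm → Equiv.Perm (Fin 2),
      ∑ αp : Fin cp → Equiv.Perm (Fin 2), if termExp L αm αp = m then
        (((((∏ l, (Equiv.Perm.sign (αm l) : ℤ)) *
        ∏ c, (Equiv.Perm.sign (αp c) : ℤ)) : ℤ) : ℂ)) else 0 := by
    intro m
    rw [expand]
    simp only [MvPolynomial.coeff_sum, MvPolynomial.coeff_monomial]
  constructor
  · rw [MvPolynomial.mem_support_iff, coeff]
    have : ∀ αm αp, (if termExp L αm αp = termExp L 1 1 then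
        (((((∏ l, (Equiv.Perm.sign (αm l) : ℤ)) *
        ∏ c, (Equiv.Perm.sign (αp c) : ℤ)) : ℤ) : ℂ)) else 0) =
        ((if termExp L αm αp = termExp L 1 1 then 1 else 0 : ℕ) : ℂ) := by
      intro αm αp
      split_ifs with h
      · rw [sign_one L hc hc' αm αp h]; simp
      · simp
    simp only [this, ← Nat.cast_sum]
    rw [Nat.cast_ne_zero]
    apply ne_of_gt
    refine Finset.sum_pos' (fun _ _ => Nat.zero_le _) ⟨1, Finset.mem_univ _, ?_⟩
    refine Finset.sum_pos' (fun _ _ => Nat.zero_le _) ⟨1, Finset.mem_univ _, ?_⟩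
    simp
  · intro m' hm'
    rw [MvPolynomial.mem_support_iff, coeff] at hm'
    obtain ⟨αm, -, h1⟩ := Finset.exists_ne_zero_of_sum_ne_zero hm'
    obtain ⟨αp, -, h2⟩ := Finset.exists_ne_zero_of_sum_ne_zero h1
    have : termExp L αm αp = m' := by
      by_contra h
      exact h2 (if_neg h)
    rw [← this]
    exact term_le L hc hc' αm αp

/-! ### Part B: monomials of semi-standard pairs -/

/-- cumulative exponents -/
def cum {K : ℕ} (m : KVar K 2 2 →₀ ℕ) (q k : Fin 2) (n : ℕ) : ℕ :=
  ∑ i : Fin K, if (i : ℕ) < n then m (i, q, k) else 0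

theorem cum_add {K : ℕ} (m m' : KVar K 2 2 →₀ ℕ) (q k : Fin 2) (n : ℕ) :
    cum (m + m') q k n = cum m q k n + cum m' q k n := by
  unfold cum
  rw [← Finset.sum_add_distrib]
  refine Finset.sum_congr rfl fun i _ => ?_
  split_ifs <;> simp

theorem cum_single {K : ℕ} (i : Fin K) (q k q' k' : Fin 2) (n : ℕ) :
    cum (Finsupp.single (i, q, k) 1) q' k' n = if q = q' ∧ k = k' ∧ (i : ℕ) < n then 1 else 0 := by
  unfold cum
  rw [Finset.sum_eq_single i]
  · simp only [Finsupp.single_apply, Prod.mk.injEq, true_and]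
    split_ifs <;> tauto
  · intro b _ hb
    simp [hb.symm]
  · simp

theorem cum_succ {K : ℕ} (m : KVar K 2 2 →₀ ℕ) (q k : Fin 2) (i : Fin K) :
    cum m q k (i + 1) = cum m q k i + m (i, q, k) := by
  unfold cum
  have : m (i, q, k) = ∑ j : Fin K, if j = i then m (j, q, k) else 0 := by simp
  rw [this, ← Finset.sum_add_distrib]
  refine Finset.sum_congr rfl fun j _ => ?_
  have := @Fin.ext_iff K j i
  split_ifs <;> omega

theorem cum_mono {K : ℕ} (m : KVar K 2 2 →₀ ℕ) (q k : Fin 2) {a b : ℕ} (h : a ≤ b) :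
    cum m q k a ≤ cum m q k b := by
  unfold cum
  refine Finset.sum_le_sum fun j _ => ?_
  split_ifs <;> omega

theorem cum_zero {K : ℕ} (m : KVar K 2 2 →₀ ℕ) (q k : Fin 2) : cum m q k 0 = 0 := by
  simp [cum]

/-- The ballot conditions. -/
structure Adm {K : ℕ} (m : KVar K 2 2 →₀ ℕ) : Prop where
  p0 : ∀ i < K, cum m 1 0 (i + 1) + cum m 1 1 i ≤ cum m 0 0 i + cum m 0 1 i
  p1 : ∀ i < K, cum m 1 0 (i + 1) + cum m 1 1 (i + 1) ≤ cum m 0 0 (i + 1) + cum m 0 1 i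
  m0 : ∀ i < K, cum m 0 1 (i + 1) + cum m 1 1 i ≤ cum m 0 0 i + cum m 1 0 i
  m1 : ∀ i < K, cum m 0 1 (i + 1) + cum m 1 1 (i + 1) ≤ cum m 0 0 (i + 1) + cum m 1 0 i
  e1 : cum m 0 0 K = cum m 1 1 K
  e2 : cum m 0 1 K = cum m 1 0 K

theorem termExp_one_p {K cm cp : ℕ} (L : LinkedPair K 2 2 cm cp) (i : Fin K) (q k : Fin 2) :
    termExp L 1 1 (i, q, k) = (Finset.univ.filter fun c => L.Tp q c = (i, k)).card := by
  rw [termExp_apply, Finset.card_filter]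
  refine Finset.sum_congr rfl fun c _ => ?_
  rw [colCnt, Finset.sum_eq_single q]
  · simp [Prod.ext_iff]
  · intro b _ hb
    simp [hb]
  · simp

theorem cum_p {K cm cp : ℕ} (L : LinkedPair K 2 2 cm cp) (q k : Fin 2) (n : ℕ) :
    cum (termExp L 1 1) q k n =
      (Finset.univ.filter fun c => (L.Tp q c).2 = k ∧ ((L.Tp q c).1 : ℕ) < n).card := by
  unfold cum
  simp only [termExp_one_p, Finset.card_filter]
  rw [← Finset.sum_filter, Finset.sum_comm]
  refine Finset.sum_congr rfl fun c _ => ?_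
  rw [← Finset.card_filter, Finset.filter_filter]
  split_ifs with h
  · rw [Finset.card_eq_one]
    refine ⟨(L.Tp q c).1, ?_⟩
    ext i
    simp only [Finset.mem_filter, Finset.mem_univ, true_and, Finset.mem_singleton]
    constructor
    · rintro ⟨-, h2⟩; rw [h2]
    · rintro rfl; exact ⟨h.2, by rw [← h.1]⟩
  · rw [Finset.card_eq_zero]
    ext i
    simp only [Finset.mem_filter, Finset.mem_univ, true_and, Finset.notMem_empty, iff_false]
    rintro ⟨h1, h2⟩
    apply h
    rw [h2]; exact ⟨rfl, h1⟩

theorem cum_dual {K cm cp : ℕ} (L : LinkedPair K 2 2 cm cp) (q k : Fin 2) (n : ℕ) :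
    cum (termExp L 1 1) q k n = cum (termExp L.dual 1 1) k q n := by
  unfold cum
  simp only [termExp_dual L]

theorem cum_m {K cm cp : ℕ} (L : LinkedPair K 2 2 cm cp) (q k : Fin 2) (n : ℕ) :
    cum (termExp L 1 1) q k n =
      (Finset.univ.filter fun c => (L.Tm k c).2 = q ∧ ((L.Tm k c).1 : ℕ) < n).card := by
  rw [cum_dual]; exact cum_p L.dual k q n

theorem adm_half {K cm cp : ℕ} (L : LinkedPair K 2 2 cm cp) (hc : ColStrict L.Tp) (a b i : ℕ)
    (hab : a = i ∧ b = i ∨ a = i + 1 ∧ b = i + 1) :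
    cum (termExp L 1 1) 1 0 (i + 1) + cum (termExp L 1 1) 1 1 a ≤
     cum (termExp L 1 1) 0 0 b + cum (termExp L 1 1) 0 1 i := by
  simp only [cum_p, Finset.card_filter, ← Finset.sum_add_distrib]
  refine Finset.sum_le_sum fun c _ => ?_
  have h := hc c
  unfold LabelLT at h
  simp only [Fin.lt_def, Fin.ext_iff] at h
  rcases fin2 (L.Tp 0 c).2 with h1 | h1 <;> rcases fin2 (L.Tp 1 c).2 with h2 | h2 <;>
    simp [h1, h2] at h ⊢ <;> split_ifs <;> omega

theorem cum_tot {K cm cp : ℕ} (L : LinkedPair K 2 2 cm cp) (q : Fin 2) :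
    cum (termExp L 1 1) q 0 K + cum (termExp L 1 1) q 1 K = cp := by
  simp only [cum_p, Finset.card_filter, ← Finset.sum_add_distrib]
  rw [Finset.sum_congr rfl (g := fun _ => 1)]
  · simp
  intro c _
  rcases fin2 (L.Tp q c).2 with h1 | h1 <;> simp [h1]

theorem cum_tot' {K cm cp : ℕ} (L : LinkedPair K 2 2 cm cp) (q : Fin 2) :
    cum (termExp L 1 1) 0 q K + cum (termExp L 1 1) 1 q K = cm := by
  rw [cum_dual L 0 q, cum_dual L 1 q]; exact cum_tot L.dual q

theorem adm_of {K cm cp : ℕ} (L : LinkedPair K 2 2 cm cp) (hc : ColStrict L.Tp)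
    (hc' : ColStrict L.Tm) : Adm (termExp L 1 1) := by
  have hcard : cm = cp := by
    have := Fintype.card_congr L.link
    simp at this
    omega
  refine ⟨fun i _ => adm_half L hc i i i (by simp), fun i _ => adm_half L hc _ _ i (by simp),
    fun i _ => ?_, fun i _ => ?_, ?_, ?_⟩
  · simp only [cum_dual L]; exact adm_half L.dual hc' i i i (by simp)
  · simp only [cum_dual L]; exact adm_half L.dual hc' _ _ i (by simp)
  · have := cum_tot L 0
    have := cum_tot L 1
    have := cum_tot' L 0
    have := cum_tot' L 1
    omega
  · have := cum_tot L 0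
    have := cum_tot L 1
    have := cum_tot' L 0
    have := cum_tot' L 1
    omega

theorem exists_sorted {α : Type} [LinearOrder α] [Fintype α] (f : α → ℕ) (n : ℕ)
    (h : ∑ a, f a = n) : ∃ g : Fin n → α, Monotone g ∧
      ∀ a, (Finset.univ.filter fun c => g c = a).card = f a := by
  have hcard : Fintype.card (Σ a : α, Fin (f a)) = n := by
    rw [Fintype.card_sigma]
    simpa using h
  let e := (Fintype.equivFinOfCardEq hcard).symm
  let e' := (Tuple.sort fun c => (e c).1).trans e
  refine ⟨fun c => (e' c).1, Tuple.monotone_sort fun c => (e c).1, ?_⟩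
  intro a
  have : (Finset.univ.filter fun c => (e' c).1 = a) =
      (Finset.univ : Finset (Fin (f a))).image (fun j => e'.symm ⟨a, j⟩) := by
    ext c
    simp only [Finset.mem_filter, Finset.mem_univ, true_and, Finset.mem_image]
    constructor
    · intro hc
      subst hc
      exact ⟨(e' c).2, e'.symm_apply_apply c⟩
    · rintro ⟨j, rfl⟩
      rw [e'.apply_symm_apply]
  rw [this, Finset.card_image_of_injective]
  · simp
  · intro x y hxy
    have := e'.symm.injective hxy
    simpa using this

instance {K n : ℕ} (a b : Fin K × Fin n) : Decidable (LabelLE a b) := by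
  unfold LabelLE; infer_instance

instance {K n : ℕ} (a b : Fin K × Fin n) : Decidable (LabelLT a b) := by
  unfold LabelLT; infer_instance

theorem strict_of_count {α : Type} [LinearOrder α] {n : ℕ} (g0 g1 : Fin n → α)
    (h0 : Monotone g0) (h1 : Monotone g1)
    (h : ∀ τ, (Finset.univ.filter fun c => g1 c ≤ τ).card ≤
      (Finset.univ.filter fun c => g0 c < τ).card) (c : Fin n) : g0 c < g1 c := by
  by_contra hc
  push Not at hc
  have a1 : (Finset.Iic c).card ≤ (Finset.univ.filter fun c' => g1 c' ≤ g1 c).card := by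
    apply Finset.card_le_card
    intro x hx
    simp only [Finset.mem_Iic] at hx
    simpa using h1 hx
  have a2 : (Finset.univ.filter fun c' => g0 c' < g1 c).card ≤ (Finset.Iio c).card := by
    apply Finset.card_le_card
    intro x hx
    simp only [Finset.mem_filter, Finset.mem_univ, true_and] at hx
    simp only [Finset.mem_Iio]
    by_contra hx'
    push Not at hx'
    exact absurd (lt_of_lt_of_le hx hc) (not_lt.2 (h0 hx'))
  have a3 := h (g1 c)
  simp only [Fin.card_Iic, Fin.card_Iio] at a1 a2
  omega

/-- Sorted two-row tableau with prescribed content. -/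
theorem exists_tab {K : ℕ} (f : Fin 2 → Fin K × Fin 2 → ℕ) (n : ℕ)
    (h : ∀ r, ∑ a, f r a = n)
    (hb : ∀ τ : Fin K × Fin 2, ∑ a, (if LabelLE a τ then f 1 a else 0) ≤
      ∑ a, (if LabelLT a τ then f 0 a else 0)) :
    ∃ T : Fin 2 → Fin n → Fin K × Fin 2, IsSemiStandardTab T ∧
      ∀ r a, (Finset.univ.filter fun c => T r c = a).card = f r a := by
  have hex := fun r => exists_sorted (α := Fin K ×ₗ Fin 2) (fun a => f r (ofLex a)) n (by
    rw [← h r]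
    exact Fintype.sum_equiv ofLex _ _ fun _ => rfl)
  choose g hg1 hg2 using hex
  have hle : ∀ a b : Fin K ×ₗ Fin 2, a ≤ b ↔ LabelLE (ofLex a) (ofLex b) := by
    intro a b
    rw [Prod.Lex.le_iff]; rfl
  have hlt : ∀ a b : Fin K ×ₗ Fin 2, a < b ↔ LabelLT (ofLex a) (ofLex b) := by
    intro a b
    rw [Prod.Lex.lt_iff]; rfl
  have cnt : ∀ r (P : Fin K × Fin 2 → Prop) [DecidablePred P],
      (Finset.univ.filter fun c => P (ofLex (g r c))).card = ∑ a, if P a then f r a else 0 := by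
    intro r P _
    have : ∀ a, f r a = ∑ c, if g r c = toLex a then 1 else 0 := by
      intro a
      rw [← Finset.card_filter, hg2]; rfl
    rw [Finset.card_filter]
    simp only [this]
    rw [← Finset.sum_filter (s := Finset.univ) P]
    rw [Finset.sum_comm]
    refine Finset.sum_congr rfl fun c _ => ?_
    rw [← Finset.card_filter, Finset.filter_filter]
    split_ifs with hP
    · symm
      rw [Finset.card_eq_one]
      refine ⟨ofLex (g r c), ?_⟩
      ext i
      simp only [Finset.mem_filter, Finset.mem_univ, true_and, Finset.mem_singleton]
      constructor
      · rintro ⟨-, h2⟩; rw [h2]; rfl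
      · rintro rfl; exact ⟨hP, rfl⟩
    · symm
      rw [Finset.card_eq_zero]
      ext i
      simp only [Finset.mem_filter, Finset.mem_univ, true_and, Finset.notMem_empty, iff_false]
      rintro ⟨h1, h2⟩
      apply hP
      rw [h2]; exact h1
  refine ⟨fun r c => ofLex (g r c), ⟨?_, ?_⟩, ?_⟩
  · intro r c c' hcc
    exact (hle _ _).1 (hg1 r hcc)
  · intro c r r' hr
    have : r = 0 ∧ r' = 1 := by omega
    obtain ⟨rfl, rfl⟩ := this
    refine (hlt _ _).1 (strict_of_count (g 0) (g 1) (hg1 0) (hg1 1) ?_ c)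
    intro τ
    have := hb (ofLex τ)
    rw [← cnt 1 (fun a => LabelLE a (ofLex τ)), ← cnt 0 (fun a => LabelLT a (ofLex τ))] at this
    simpa only [hle, hlt] using this
  · intro r a
    exact hg2 r (toLex a)

theorem exists_link {K n : ℕ} (Tm Tp : Fin 2 → Fin n → Fin K × Fin 2)
    (h : ∀ (i : Fin K) (q k : Fin 2), (Finset.univ.filter fun c => Tm k c = (i, q)).card =
      (Finset.univ.filter fun c => Tp q c = (i, k)).card) :
    ∃ L : LinkedPair K 2 2 n n, L.Tm = Tm ∧ L.Tp = Tp ∧ IsSemiStandardLink L := by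
  classical
  let fm : Fin 2 × Fin n → KVar K 2 2 := fun B => ((Tm B.1 B.2).1, (Tm B.1 B.2).2, B.1)
  let fp : Fin 2 × Fin n → KVar K 2 2 := fun B => ((Tp B.1 B.2).1, B.1, (Tp B.1 B.2).2)
  have hfm : ∀ v B, fm B = v ↔ B.1 = v.2.2 ∧ Tm v.2.2 B.2 = (v.1, v.2.1) := by
    rintro ⟨i, q, k⟩ ⟨p, c⟩
    simp only [fm, Prod.ext_iff]
    constructor
    · rintro ⟨h1, h2, rfl⟩; exact ⟨rfl, h1, h2⟩
    · rintro ⟨rfl, h1, h2⟩; exact ⟨h1, h2, rfl⟩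
  have hfp : ∀ v B, fp B = v ↔ B.1 = v.2.1 ∧ Tp v.2.1 B.2 = (v.1, v.2.2) := by
    rintro ⟨i, q, k⟩ ⟨p, c⟩
    simp only [fp, Prod.ext_iff]
    constructor
    · rintro ⟨h1, rfl, h2⟩; exact ⟨rfl, h1, h2⟩
    · rintro ⟨rfl, h1, h2⟩; exact ⟨h1, rfl, h2⟩
  let Sm : KVar K 2 2 → Finset (Fin n) := fun v =>
    Finset.univ.filter fun c => Tm v.2.2 c = (v.1, v.2.1)
  let Sp : KVar K 2 2 → Finset (Fin n) := fun v =>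
    Finset.univ.filter fun c => Tp v.2.1 c = (v.1, v.2.2)
  have hS : ∀ v, (Sm v).card = (Sp v).card := fun v => h v.1 v.2.1 v.2.2
  let o : ∀ v, Sm v ≃o Sp v := fun v =>
    ((Sm v).orderIsoOfFin rfl).symm.trans ((Sp v).orderIsoOfFin (hS v).symm)
  let e1 : ∀ v, {B // fm B = v} ≃ Sm v := fun v =>
    { toFun := fun B => ⟨B.1.2, by
        have := (hfm v B.1).1 B.2
        simp only [Sm, Finset.mem_filter, Finset.mem_univ, true_and]; exact this.2⟩
      invFun := fun c => ⟨(v.2.2, c.1), by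
        have := c.2
        simp only [Sm, Finset.mem_filter, Finset.mem_univ, true_and] at this
        exact (hfm v _).2 ⟨rfl, this⟩⟩
      left_inv := by
        rintro ⟨⟨p, c⟩, hB⟩
        have := ((hfm v _).1 hB).1
        simp only at this
        simp [this]
      right_inv := by
        rintro ⟨c, hc⟩
        rfl }
  let e2 : ∀ v, {B // fp B = v} ≃ Sp v := fun v =>
    { toFun := fun B => ⟨B.1.2, by
        have := (hfp v B.1).1 B.2
        simp only [Sp, Finset.mem_filter, Finset.mem_univ, true_and]; exact this.2⟩
      invFun := fun c => ⟨(v.2.1, c.1), by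
        have := c.2
        simp only [Sp, Finset.mem_filter, Finset.mem_univ, true_and] at this
        exact (hfp v _).2 ⟨rfl, this⟩⟩
      left_inv := by
        rintro ⟨⟨p, c⟩, hB⟩
        have := ((hfp v _).1 hB).1
        simp only at this
        simp [this]
      right_inv := by
        rintro ⟨c, hc⟩
        rfl }
  let E : ∀ v, {B // fm B = v} ≃ {B // fp B = v} := fun v =>
    (e1 v).trans ((o v).toEquiv.trans (e2 v).symm)
  let lk : Fin 2 × Fin n ≃ Fin 2 × Fin n := Equiv.ofFiberEquiv E
  have hlk : ∀ B, fp (lk B) = fm B := fun B => Equiv.ofFiberEquiv_map E B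
  have hlk' : ∀ v B (hB : fm B = v), lk B = ((E v) ⟨B, hB⟩).1 := by
    rintro v B rfl
    rfl
  refine ⟨⟨Tm, Tp, lk, ?_, ?_⟩, rfl, rfl, ?_⟩
  · intro p c
    have := hlk (p, c)
    simp only [fp, fm, Prod.mk.injEq] at this
    exact this.2.1
  · intro p c
    have := hlk (p, c)
    simp only [fp, fm, Prod.mk.injEq] at this
    exact Prod.ext this.1 this.2.2
  · intro p c c' hcc hlt
    simp only at hcc ⊢
    have h1 : fm (p, c') = fm (p, c) := by simp only [fm, hcc]
    rw [hlk' (fm (p, c)) (p, c) rfl, hlk' (fm (p, c)) (p, c') h1]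
    have := (o (fm (p, c))).strictMono (a := e1 _ ⟨(p, c), rfl⟩) (b := e1 _ ⟨(p, c'), h1⟩) hlt
    exact this

theorem sum_label {K : ℕ} (F : Fin K × Fin 2 → ℕ) :
    ∑ a, F a = ∑ i, F (i, 0) + ∑ i, F (i, 1) := by
  rw [Fintype.sum_prod_type, ← Finset.sum_add_distrib]
  refine Finset.sum_congr rfl fun i _ => ?_
  rw [Fin.sum_univ_two]

theorem cum_full {K : ℕ} (m : KVar K 2 2 →₀ ℕ) (q k : Fin 2) :
    cum m q k K = ∑ i, m (i, q, k) := by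
  unfold cum
  refine Finset.sum_congr rfl fun i _ => ?_
  simp

theorem exists_pair {K : ℕ} (m : KVar K 2 2 →₀ ℕ) (h : Adm m) :
    ∃ L : LinkedPair K 2 2 (cum m 0 0 K + cum m 1 0 K) (cum m 0 0 K + cum m 1 0 K),
      IsSemiStandardPair L ∧ termExp L 1 1 = m := by
  have e1 := h.e1
  have e2 := h.e2
  obtain ⟨Tp, hp1, hp2⟩ := exists_tab (fun q a => m (a.1, q, a.2)) (cum m 0 0 K + cum m 1 0 K)
    (by
      intro r
      rw [sum_label]
      simp only [← cum_full]
      rcases fin2 r with rfl | rfl <;> omega)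
    (by
      rintro ⟨i, k⟩
      rw [sum_label, sum_label]
      have h0 := h.p0 i i.2
      have h1 := h.p1 i i.2
      unfold cum at h0 h1
      simp only [LabelLE, LabelLT, Nat.lt_succ_iff] at h0 h1 ⊢
      rcases fin2 k with rfl | rfl
      · simpa [← le_iff_lt_or_eq] using h0
      · simpa [← le_iff_lt_or_eq] using h1)
  obtain ⟨Tm, hm1, hm2⟩ := exists_tab (fun k a => m (a.1, a.2, k)) (cum m 0 0 K + cum m 1 0 K)
    (by
      intro r
      rw [sum_label]
      simp only [← cum_full]
      rcases fin2 r with rfl | rfl <;> omega)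
    (by
      rintro ⟨i, k⟩
      rw [sum_label, sum_label]
      have h0 := h.m0 i i.2
      have h1 := h.m1 i i.2
      unfold cum at h0 h1
      simp only [LabelLE, LabelLT, Nat.lt_succ_iff] at h0 h1 ⊢
      rcases fin2 k with rfl | rfl
      · simpa [← le_iff_lt_or_eq] using h0
      · simpa [← le_iff_lt_or_eq] using h1)
  obtain ⟨L, rfl, rfl, hL⟩ := exists_link Tm Tp (by
    intro i q k
    rw [hm2, hp2])
  refine ⟨L, ⟨hm1, hp1, hL⟩, ?_⟩
  ext ⟨i, q, k⟩
  rw [termExp_one_p, hp2]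

theorem colStrict_of {K cols : ℕ} {T : Fin 2 → Fin cols → Fin K × Fin 2}
    (h : IsSemiStandardTab T) : ColStrict T := fun c => h.2 c 0 1 (by decide)

/-- A primitive pair's exponent vector does not decompose. -/
theorem prim_indec {K cm cp : ℕ} (L : LinkedPair K 2 2 cm cp) (h : IsPrimitive L)
    (m1 m2 : KVar K 2 2 →₀ ℕ) (h1 : Adm m1) (h2 : Adm m2) (hm : termExp L 1 1 = m1 + m2)
    (n1 : 0 < cum m1 0 0 K) (n2 : 0 < cum m2 0 0 K) : False := by
  obtain ⟨hs, -, hne⟩ := h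
  obtain ⟨L1, hL1, e1⟩ := exists_pair m1 h1
  obtain ⟨L2, hL2, e2⟩ := exists_pair m2 h2
  exact hne ⟨_, _, _, _, L1, L2, _, _, _, by omega, by omega, hL1, hL2,
    isLM_pair L (colStrict_of hs.2.1) (colStrict_of hs.1),
    isLM_pair L1 (colStrict_of hL1.2.1) (colStrict_of hL1.1),
    isLM_pair L2 (colStrict_of hL2.2.1) (colStrict_of hL2.1), by rw [hm, e1, e2]⟩

/-! ### Part C: combinatorics -/

/-- slack of the ballot condition for `T⁺` -/
def Gp {K : ℕ} (m : KVar K 2 2 →₀ ℕ) (n : ℕ) : ℤ :=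
  (cum m 0 0 ((n + 1) / 2) : ℤ) + cum m 0 1 (n / 2) - cum m 1 0 (n / 2 + 1) - cum m 1 1 ((n + 1) / 2)

/-- slack of the ballot condition for `T⁻` -/
def Gm {K : ℕ} (m : KVar K 2 2 →₀ ℕ) (n : ℕ) : ℤ :=
  (cum m 0 0 ((n + 1) / 2) : ℤ) + cum m 1 0 (n / 2) - cum m 0 1 (n / 2 + 1) - cum m 1 1 ((n + 1) / 2)

theorem Gp_even {K : ℕ} (m : KVar K 2 2 →₀ ℕ) (i : ℕ) : Gp m (2 * i) =
    (cum m 0 0 i : ℤ) + cum m 0 1 i - cum m 1 0 (i + 1) - cum m 1 1 i := by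
  unfold Gp
  rw [show (2 * i + 1) / 2 = i by omega, show 2 * i / 2 = i by omega]

theorem Gp_odd {K : ℕ} (m : KVar K 2 2 →₀ ℕ) (i : ℕ) : Gp m (2 * i + 1) =
    (cum m 0 0 (i + 1) : ℤ) + cum m 0 1 i - cum m 1 0 (i + 1) - cum m 1 1 (i + 1) := by
  unfold Gp
  rw [show (2 * i + 1 + 1) / 2 = i + 1 by omega, show (2 * i + 1) / 2 = i by omega]

theorem Gm_even {K : ℕ} (m : KVar K 2 2 →₀ ℕ) (i : ℕ) : Gm m (2 * i) =
    (cum m 0 0 i : ℤ) + cum m 1 0 i - cum m 0 1 (i + 1) - cum m 1 1 i := by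
  unfold Gm
  rw [show (2 * i + 1) / 2 = i by omega, show 2 * i / 2 = i by omega]

theorem Gm_odd {K : ℕ} (m : KVar K 2 2 →₀ ℕ) (i : ℕ) : Gm m (2 * i + 1) =
    (cum m 0 0 (i + 1) : ℤ) + cum m 1 0 i - cum m 0 1 (i + 1) - cum m 1 1 (i + 1) := by
  unfold Gm
  rw [show (2 * i + 1 + 1) / 2 = i + 1 by omega, show (2 * i + 1) / 2 = i by omega]

/-- indecomposable -/
def Indec {K : ℕ} (m : KVar K 2 2 →₀ ℕ) : Prop :=
  ∀ m1 m2 : KVar K 2 2 →₀ ℕ, Adm m1 → Adm m2 → m = m1 + m2 →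
    0 < cum m1 0 0 K → 0 < cum m2 0 0 K → False

theorem removePQ {K : ℕ} (m : KVar K 2 2 →₀ ℕ) (hm : Adm m) (hi : Indec m) (α β : Fin K)
    (hα : 0 < m (α, 0, 0)) (hβ : 0 < m (β, 1, 1)) (hab : α ≤ β) (h2 : 2 ≤ cum m 0 0 K)
    (hp : ∀ n, 2 * (α : ℕ) + 1 ≤ n → n ≤ 2 * (β : ℕ) → 1 ≤ Gp m n)
    (hmm : ∀ n, 2 * (α : ℕ) + 1 ≤ n → n ≤ 2 * (β : ℕ) → 1 ≤ Gm m n) : False := by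
  have hab' : (α : ℕ) ≤ β := hab
  have hA := α.2
  have hB := β.2
  let m1 : KVar K 2 2 →₀ ℕ := Finsupp.single (α, 0, 0) 1 + Finsupp.single (β, 1, 1) 1
  have hle : m1 ≤ m := by
    intro v
    simp only [m1, Finsupp.add_apply, Finsupp.single_apply]
    split_ifs with h3 h4 h4
    · rw [← h4] at h3; simp at h3
    · subst h3; omega
    · subst h4; omega
    · omega
  have hs : m = m1 + (m - m1) := (add_tsub_cancel_of_le hle).symm
  have c1 : ∀ q k n, cum m1 q k n = (if 0 = q ∧ 0 = k ∧ (α : ℕ) < n then 1 else 0) +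
      (if 1 = q ∧ 1 = k ∧ (β : ℕ) < n then 1 else 0) := by
    intro q k n
    simp only [m1, cum_add, cum_single]
  have c2 : ∀ q k n, cum m q k n = cum m1 q k n + cum (m - m1) q k n := by
    intro q k n
    rw [← cum_add, ← hs]
  have d1 := fun n => c1 0 0 n
  have d2 := fun n => c1 0 1 n
  have d3 := fun n => c1 1 0 n
  have d4 := fun n => c1 1 1 n
  have z1 : ¬ (0 : Fin 2) = 1 := by decide
  have z2 : ¬ (1 : Fin 2) = 0 := by decide
  simp only [z1, z2, true_and, false_and, and_false, if_false, add_zero, zero_add] at d1 d2 d3 d4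
  refine hi m1 (m - m1) ?_ ?_ hs ?_ ?_
  · constructor
    · intro i hiK
      rw [d1, d2, d3, d4]; split_ifs <;> omega
    · intro i hiK
      rw [d1, d2, d3, d4]; split_ifs <;> omega
    · intro i hiK
      rw [d1, d2, d3, d4]; split_ifs <;> omega
    · intro i hiK
      rw [d1, d2, d3, d4]; split_ifs <;> omega
    · rw [d1, d4]; split_ifs <;> omega
    · rw [d2, d3]
  · constructor
    · intro i hiK
      have g := hm.p0 i hiK
      have g' := hp (2 * i)
      rw [Gp_even] at g'
      simp only [c2, d1, d2, d3, d4] at g g'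
      split_ifs at g g' <;> omega
    · intro i hiK
      have g := hm.p1 i hiK
      have g' := hp (2 * i + 1)
      rw [Gp_odd] at g'
      simp only [c2, d1, d2, d3, d4] at g g'
      split_ifs at g g' <;> omega
    · intro i hiK
      have g := hm.m0 i hiK
      have g' := hmm (2 * i)
      rw [Gm_even] at g'
      simp only [c2, d1, d2, d3, d4] at g g'
      split_ifs at g g' <;> omega
    · intro i hiK
      have g := hm.m1 i hiK
      have g' := hmm (2 * i + 1)
      rw [Gm_odd] at g'
      simp only [c2, d1, d2, d3, d4] at g g'
      split_ifs at g g' <;> omega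
    · have g := hm.e1
      simp only [c2, d1, d2, d3, d4] at g
      split_ifs at g <;> omega
    · have g := hm.e2
      simp only [c2, d1, d2, d3, d4] at g
      omega
  · rw [d1]; split_ifs; omega
  · rw [c2, d1] at h2
    split_ifs at h2; omega

theorem removePVUQ {K : ℕ} (m : KVar K 2 2 →₀ ℕ) (hm : Adm m) (hi : Indec m) (α ν μ β : Fin K)
    (hα : 0 < m (α, 0, 0)) (hβ : 0 < m (β, 1, 1)) (hν : 0 < m (ν, 1, 0)) (hμ : 0 < m (μ, 0, 1))
    (o1 : (α : ℕ) < ν) (o2 : (ν : ℕ) ≤ μ) (o3 : (μ : ℕ) < β) (h2 : 2 ≤ cum m 0 0 K)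
    (hp : ∀ n, 2 * (α : ℕ) + 1 ≤ n → n < 2 * (ν : ℕ) → 1 ≤ Gp m n)
    (hp' : ∀ n, 2 * (μ : ℕ) + 2 ≤ n → n ≤ 2 * (β : ℕ) → 1 ≤ Gp m n)
    (hmm : ∀ n, 2 * (α : ℕ) + 1 ≤ n → n ≤ 2 * (β : ℕ) → 2 ≤ Gm m n) : False := by
  have hA := α.2
  have hB := β.2
  let m1 : KVar K 2 2 →₀ ℕ := Finsupp.single (α, 0, 0) 1 + Finsupp.single (β, 1, 1) 1 +
    Finsupp.single (ν, 1, 0) 1 + Finsupp.single (μ, 0, 1) 1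
  have hle : m1 ≤ m := by
    rintro ⟨i, q, k⟩
    simp only [m1, Finsupp.add_apply, Finsupp.single_apply, Prod.mk.injEq]
    rcases fin2 q with rfl | rfl <;> rcases fin2 k with rfl | rfl <;> simp <;> split_ifs with h <;>
      first | omega | (subst h; omega)
  have hs : m = m1 + (m - m1) := (add_tsub_cancel_of_le hle).symm
  have c1 : ∀ q k n, cum m1 q k n = (if 0 = q ∧ 0 = k ∧ (α : ℕ) < n then 1 else 0) +
      (if 1 = q ∧ 1 = k ∧ (β : ℕ) < n then 1 else 0) +
      (if 1 = q ∧ 0 = k ∧ (ν : ℕ) < n then 1 else 0) +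
      (if 0 = q ∧ 1 = k ∧ (μ : ℕ) < n then 1 else 0) := by
    intro q k n
    simp only [m1, cum_add, cum_single]
  have c2 : ∀ q k n, cum m q k n = cum m1 q k n + cum (m - m1) q k n := by
    intro q k n
    rw [← cum_add, ← hs]
  have d1 := fun n => c1 0 0 n
  have d2 := fun n => c1 0 1 n
  have d3 := fun n => c1 1 0 n
  have d4 := fun n => c1 1 1 n
  have z1 : ¬ (0 : Fin 2) = 1 := by decide
  have z2 : ¬ (1 : Fin 2) = 0 := by decide
  simp only [z1, z2, true_and, false_and, if_false, add_zero, zero_add] at d1 d2 d3 d4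
  refine hi m1 (m - m1) ?_ ?_ hs ?_ ?_
  · constructor
    · intro i hiK
      rw [d1, d2, d3, d4]; split_ifs <;> omega
    · intro i hiK
      rw [d1, d2, d3, d4]; split_ifs <;> omega
    · intro i hiK
      rw [d1, d2, d3, d4]; split_ifs <;> omega
    · intro i hiK
      rw [d1, d2, d3, d4]; split_ifs <;> omega
    · rw [d1, d4]; split_ifs <;> omega
    · rw [d2, d3]; split_ifs <;> omega
  · constructor
    · intro i hiK
      have g := hm.p0 i hiK
      have g' := hp (2 * i)
      have g2x := hp' (2 * i)
      rw [Gp_even] at g' g2x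
      simp only [c2, d1, d2, d3, d4] at g g' g2x
      split_ifs at g g' g2x <;> omega
    · intro i hiK
      have g := hm.p1 i hiK
      have g' := hp (2 * i + 1)
      have g2x := hp' (2 * i + 1)
      rw [Gp_odd] at g' g2x
      simp only [c2, d1, d2, d3, d4] at g g' g2x
      split_ifs at g g' g2x <;> omega
    · intro i hiK
      have g := hm.m0 i hiK
      have g' := hmm (2 * i)
      rw [Gm_even] at g'
      simp only [c2, d1, d2, d3, d4] at g g'
      split_ifs at g g' <;> omega
    · intro i hiK
      have g := hm.m1 i hiK
      have g' := hmm (2 * i + 1)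
      rw [Gm_odd] at g'
      simp only [c2, d1, d2, d3, d4] at g g'
      split_ifs at g g' <;> omega
    · have g := hm.e1
      simp only [c2, d1, d2, d3, d4] at g
      split_ifs at g <;> omega
    · have g := hm.e2
      simp only [c2, d1, d2, d3, d4] at g
      split_ifs at g <;> omega
  · rw [d1]; split_ifs; omega
  · rw [c2, d1] at h2
    split_ifs at h2; omega

theorem core {K : ℕ} (m : KVar K 2 2 →₀ ℕ) (hm : Adm m) (hi : Indec m) (α β : Fin K) (j l : ℕ)
    (hj1 : cum m 0 0 α < j) (hj2 : j ≤ cum m 0 0 (α + 1)) (hY : cum m 0 1 α < cum m 1 0 α)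
    (hl : l + cum m 1 0 α = j + cum m 0 1 α)
    (hl1 : cum m 1 1 β < l) (hl2 : l ≤ cum m 1 1 (β + 1))
    (hU : cum m 0 1 (β + 1) + cum m 0 1 α < 2 * cum m 1 0 α) : False := by
  have hA := α.2
  have hB := β.2
  have sα := cum_succ m 0 0 α
  have sβ := cum_succ m 1 1 β
  have p0α := hm.p0 α hA
  have v1 := cum_mono m 1 0 (Nat.le_succ (α : ℕ))
  have h2 : 2 ≤ cum m 0 0 K := by
    have := cum_mono m 0 0 (show (α : ℕ) + 1 ≤ K by omega)
    simp only [Nat.succ_eq_add_one] at v1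
    omega
  simp only [Nat.succ_eq_add_one] at v1
  have hαβ : (α : ℕ) ≤ β := by
    by_contra h
    have := cum_mono m 1 1 (show (β : ℕ) + 1 ≤ α by omega)
    omega
  have Gm2 : ∀ n, 2 * (α : ℕ) + 1 ≤ n → n ≤ 2 * (β : ℕ) → 2 ≤ Gm m n := by
    intro n h1 h2
    obtain ⟨i, rfl | rfl⟩ := Nat.even_or_odd' n
    · rw [Gm_even]
      have a1 := cum_mono m 0 0 (show (α : ℕ) + 1 ≤ i by omega)
      have a2 := cum_mono m 1 1 (show i ≤ β by omega)
      have a3 := cum_mono m 1 0 (show (α : ℕ) ≤ i by omega)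
      have a4 := cum_mono m 0 1 (show i + 1 ≤ β + 1 by omega)
      omega
    · rw [Gm_odd]
      have a1 := cum_mono m 0 0 (show (α : ℕ) + 1 ≤ i + 1 by omega)
      have a2 := cum_mono m 1 1 (show i + 1 ≤ β by omega)
      have a3 := cum_mono m 1 0 (show (α : ℕ) ≤ i by omega)
      have a4 := cum_mono m 0 1 (show i + 1 ≤ β + 1 by omega)
      omega
  have Gp0 : ∀ n, n < 2 * K → 0 ≤ Gp m n := by
    intro n h
    obtain ⟨i, rfl | rfl⟩ := Nat.even_or_odd' n
    · rw [Gp_even]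
      have := hm.p0 i (by omega)
      omega
    · rw [Gp_odd]
      have := hm.p1 i (by omega)
      omega
  have hPα : 0 < m (α, 0, 0) := by omega
  have hQβ : 0 < m (β, 1, 1) := by omega
  let S := (Finset.Icc (2 * (α : ℕ) + 1) (2 * (β : ℕ))).filter fun n => Gp m n = 0
  have hS : ∀ n, 2 * (α : ℕ) + 1 ≤ n → n ≤ 2 * (β : ℕ) → n ∉ S → 1 ≤ Gp m n := by
    intro n h1 h2 h3
    have h4 := Gp0 n (by omega)
    have : Gp m n ≠ 0 := by
      intro h
      apply h3
      simp only [S, Finset.mem_filter, Finset.mem_Icc]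
      exact ⟨⟨h1, h2⟩, h⟩
    omega
  by_cases hne : S.Nonempty
  swap
  · rw [Finset.not_nonempty_iff_eq_empty] at hne
    refine removePQ m hm hi α β hPα hQβ hαβ h2 (fun n h1 h2 => hS n h1 h2 (by simp [hne]))
      (fun n h1 h2 => by have := Gm2 n h1 h2; omega)
  have t1 := S.min'_mem hne
  have t2 := S.max'_mem hne
  have l1 : ∀ n, 2 * (α : ℕ) + 1 ≤ n → n ≤ 2 * (β : ℕ) → n < S.min' hne → 1 ≤ Gp m n := by
    intro n h1 h2 h3
    refine hS n h1 h2 fun h => ?_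
    exact absurd (S.min'_le n h) (by omega)
  have l2 : ∀ n, 2 * (α : ℕ) + 1 ≤ n → n ≤ 2 * (β : ℕ) → S.max' hne < n → 1 ≤ Gp m n := by
    intro n h1 h2 h3
    refine hS n h1 h2 fun h => ?_
    exact absurd (S.le_max' n h) (by omega)
  have l3 := S.min'_le_max' hne
  generalize S.min' hne = τ1 at *
  generalize S.max' hne = τ2 at *
  simp only [S, Finset.mem_filter, Finset.mem_Icc] at t1 t2
  obtain ⟨⟨t1a, t1b⟩, t1c⟩ := t1
  obtain ⟨⟨t2a, t2b⟩, t2c⟩ := t2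
  obtain ⟨i, rfl | rfl⟩ := Nat.even_or_odd' τ2
  · -- a `P` right after the last touch
    have hiK : i < K := by omega
    have s1 := cum_succ m 0 0 ⟨i, hiK⟩
    have s2 := cum_succ m 1 1 ⟨i, hiK⟩
    simp only at s1 s2
    have g0 := Gp_even m i
    have g1 := Gp_odd m i
    have hpi : 0 < m (⟨i, hiK⟩, 0, 0) := by
      by_cases hib : i < β
      · have := l2 (2 * i + 1) (by omega) (by omega) (by omega)
        omega
      · have hib : i = β := by omega
        subst hib
        have := Gp0 (2 * β + 1) (by omega)
        simp only [Fin.eta] at s1 s2 ⊢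
        omega
    exact removePQ m hm hi ⟨i, hiK⟩ β hpi hQβ (by rw [Fin.le_def]; simp only; omega) h2
      (fun n h1 h2 => l2 n (by simp only at h1; omega) h2 (by simp only at h1; omega))
      (fun n h1 h2 => by have := Gm2 n (by simp only at h1; omega) h2; omega)
  have hiK : i < K := by omega
  have hUi : 0 < m (⟨i, hiK⟩, 0, 1) := by
    have s1 := cum_succ m 0 1 ⟨i, hiK⟩
    simp only at s1
    have s2 := cum_mono m 1 0 (show i + 1 ≤ i + 1 + 1 by omega)
    have g0 := Gp_odd m i
    have g1 := Gp_even m (i + 1)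
    have := l2 (2 * (i + 1)) (by omega) (by omega) (by omega)
    omega
  obtain ⟨k, rfl | rfl⟩ := Nat.even_or_odd' τ1
  · have hkK : k < K := by omega
    have hVk : 0 < m (⟨k, hkK⟩, 1, 0) := by
      have s1 := cum_succ m 1 0 ⟨k, hkK⟩
      simp only at s1
      obtain ⟨k', rfl⟩ : ∃ k', k = k' + 1 := ⟨k - 1, by omega⟩
      have s2 := cum_mono m 0 1 (show k' ≤ k' + 1 by omega)
      have g0 := Gp_even m (k' + 1)
      have g1 := Gp_odd m k'
      have := l1 (2 * k' + 1) (by omega) (by omega) (by omega)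
      omega
    exact removePVUQ m hm hi α ⟨k, hkK⟩ ⟨i, hiK⟩ β hPα hQβ hVk hUi (by simp only; omega)
      (by simp only; omega) (by simp only; omega) h2
      (fun n h1 h2 => l1 n h1 (by simp only at h2; omega) h2)
      (fun n h1 h2 => l2 n (by simp only at h1; omega) h2 (by simp only at h1; omega)) Gm2
  · have hkK : k < K := by omega
    have s1 := cum_succ m 0 0 ⟨k, hkK⟩
    have s2 := cum_succ m 1 1 ⟨k, hkK⟩
    simp only at s1 s2
    have g0 := Gp_even m k
    have g1 := Gp_odd m k
    have hQk : 0 < m (⟨k, hkK⟩, 1, 1) := by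
      by_cases hka : (α : ℕ) < k
      · have := l1 (2 * k) (by omega) (by omega) (by omega)
        omega
      · have hka : k = α := by omega
        subst hka
        have := Gp0 (2 * α) (by omega)
        simp only [Fin.eta] at s1 s2 ⊢
        omega
    exact removePQ m hm hi α ⟨k, hkK⟩ hPα hQk (by rw [Fin.le_def]; simp only; omega) h2
      (fun n h1 h2 => l1 n h1 (by simp only at h2; omega) (by simp only at h2; omega))
      (fun n h1 h2 => by have := Gm2 n h1 (by simp only at h2; omega); omega)

theorem exists_level {K : ℕ} (m : KVar K 2 2 →₀ ℕ) (q k : Fin 2) (l : ℕ) (h0 : 0 < l)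
    (h : l ≤ cum m q k K) : ∃ β : Fin K, cum m q k β < l ∧ l ≤ cum m q k (β + 1) := by
  have hex : ∃ n, l ≤ cum m q k n := ⟨K, h⟩
  classical
  have h1 := Nat.find_spec hex
  have h2 : Nat.find hex ≤ K := Nat.find_min' hex h
  have h3 : Nat.find hex ≠ 0 := by
    intro h
    rw [h, cum_zero] at h1
    omega
  refine ⟨⟨Nat.find hex - 1, by omega⟩, ?_, ?_⟩
  · have := Nat.find_min hex (m := Nat.find hex - 1) (by omega)
    simpa using this
  · simp only
    rw [Nat.sub_add_cancel (by omega)]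
    exact h1

/-- Counting in an interval of columns, split by the second entry of the labels. -/
theorem count_lt {cm : ℕ} (f : Fin cm → Fin 2) (b : Fin cm) :
    (Finset.univ.filter fun c => f c = 0 ∧ c < b).card +
      (Finset.univ.filter fun c => f c = 1 ∧ c < b).card = (b : ℕ) := by
  have h : (Finset.univ.filter fun c => c < b).card = (b : ℕ) := by
    have : (Finset.univ.filter fun c => c < b) = Finset.Iio b := by ext; simp
    rw [this, Fin.card_Iio]
  rw [← h, ← Finset.card_union_of_disjoint]
  · congr 1
    ext c
    simp only [Finset.mem_union, Finset.mem_filter, Finset.mem_univ, true_and]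
    rcases fin2 (f c) with h | h <;> simp [h]
  · rw [Finset.disjoint_left]
    intro c hc hc'
    simp only [Finset.mem_filter, Finset.mem_univ, true_and] at hc hc'
    rw [hc.1] at hc'
    exact absurd hc'.1 (by decide)

/-- In a weakly increasing row, the labels `(i, 1)` before a box labelled `(a, 0)` are those with
`i < a`. -/
theorem count_before {K n : ℕ} (T : Fin n → Fin K × Fin 2)
    (hT : ∀ c c', c ≤ c' → LabelLE (T c) (T c')) (b : Fin n) (hb : (T b).2 = 0) :
    (Finset.univ.filter fun c => (T c).2 = 1 ∧ c < b).card =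
      (Finset.univ.filter fun c => (T c).2 = 1 ∧ ((T c).1 : ℕ) < (T b).1).card := by
  congr 1
  ext c
  simp only [Finset.mem_filter, Finset.mem_univ, true_and]
  refine and_congr_right fun hc => ⟨fun h => ?_, fun h => ?_⟩
  · rcases hT c b h.le with h' | ⟨_, h'⟩
    · exact h'
    · rw [hc, hb] at h'
      exact absurd h' (by decide)
  · by_contra hlt
    rcases hT b c (not_lt.mp hlt) with h' | ⟨h', _⟩
    · exact absurd (Fin.lt_def.mp h') (by omega)
    · rw [h'] at h
      omega

theorem count_j {K n : ℕ} (T : Fin n → Fin K × Fin 2)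
    (hT : ∀ c c', c ≤ c' → LabelLE (T c) (T c')) (b : Fin n) (hb : (T b).2 = 0) :
    (Finset.univ.filter fun c => (T c).2 = 0 ∧ ((T c).1 : ℕ) < (T b).1).card <
      (Finset.univ.filter fun c => (T c).2 = 0 ∧ c ≤ b).card ∧
    (Finset.univ.filter fun c => (T c).2 = 0 ∧ c ≤ b).card ≤
      (Finset.univ.filter fun c => (T c).2 = 0 ∧ ((T c).1 : ℕ) < (T b).1 + 1).card ∧
    (Finset.univ.filter fun c => (T c).2 = 0 ∧ c ≤ b).card =
      (Finset.univ.filter fun c => (T c).2 = 0 ∧ c < b).card + 1 := by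
  refine ⟨Finset.card_lt_card ?_, Finset.card_le_card ?_, ?_⟩
  · rw [Finset.ssubset_iff_of_subset]
    · exact ⟨b, by simp [hb], by simp⟩
    · intro c hc
      simp only [Finset.mem_filter, Finset.mem_univ, true_and] at hc ⊢
      refine ⟨hc.1, ?_⟩
      by_contra hlt
      rcases hT b c (not_le.mp hlt).le with h' | ⟨h', _⟩
      · exact absurd (Fin.lt_def.mp h') (by omega)
      · rw [h'] at hc
        omega
  · intro c hc
    simp only [Finset.mem_filter, Finset.mem_univ, true_and] at hc ⊢
    refine ⟨hc.1, ?_⟩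
    rcases hT c b hc.2 with h' | ⟨h', _⟩
    · have := Fin.lt_def.mp h'
      omega
    · rw [h']
      omega
  · have : (Finset.univ.filter fun c => (T c).2 = 0 ∧ c ≤ b) =
        insert b (Finset.univ.filter fun c => (T c).2 = 0 ∧ c < b) := by
      ext c
      simp only [Finset.mem_insert, Finset.mem_filter, Finset.mem_univ, true_and]
      constructor
      · rintro ⟨h1, h2⟩
        rcases h2.eq_or_lt with h | h
        · exact Or.inl h
        · exact Or.inr ⟨h1, h⟩
      · rintro (rfl | ⟨h1, h2⟩)
        · exact ⟨hb, le_rfl⟩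
        · exact ⟨h1, h2.le⟩
    rw [this, Finset.card_insert_of_notMem (by simp)]

/-- If more than `Q(β)` labels `(i, 1)` occur before column `b`, then so do all labels `(i, 0)`
with `i ≤ β`. -/
theorem count_s {K n : ℕ} (T : Fin n → Fin K × Fin 2)
    (hT : ∀ c c', c ≤ c' → LabelLE (T c) (T c')) (b : Fin n) (β : ℕ)
    (h : (Finset.univ.filter fun c => (T c).2 = 1 ∧ ((T c).1 : ℕ) < β).card <
      (Finset.univ.filter fun c => (T c).2 = 1 ∧ c < b).card) :
    (Finset.univ.filter fun c => (T c).2 = 0 ∧ ((T c).1 : ℕ) < β + 1).card ≤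
      (Finset.univ.filter fun c => (T c).2 = 0 ∧ c < b).card := by
  obtain ⟨c0, h1, h2⟩ := Finset.exists_mem_notMem_of_card_lt_card h
  simp only [Finset.mem_filter, Finset.mem_univ, true_and, not_and, not_lt] at h1 h2
  have h3 := h2 h1.1
  refine Finset.card_le_card fun c hc => ?_
  simp only [Finset.mem_filter, Finset.mem_univ, true_and] at hc ⊢
  refine ⟨hc.1, lt_of_lt_of_le ?_ h1.2.le⟩
  by_contra hlt
  rcases hT c0 c (not_lt.mp hlt) with h' | ⟨_, h'⟩
  · have := Fin.lt_def.mp h'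
    omega
  · rw [hc.1, h1.1] at h'
    exact absurd h' (by decide)

theorem count_s_le {K n : ℕ} (T : Fin n → Fin K × Fin 2) (b : Fin n) :
    (Finset.univ.filter fun c => (T c).2 = 1 ∧ c < b).card ≤
    (Finset.univ.filter fun c => (T c).2 = 1 ∧ ((T c).1 : ℕ) < K).card := by
  refine Finset.card_le_card fun c hc => ?_
  simp only [Finset.mem_filter, Finset.mem_univ, true_and] at hc ⊢
  exact ⟨hc.1, (T c).1.2⟩

/-- Let `r0 = r1 = 2` and let `(T⁻, T⁺, σ)` be a primitive
semi-standard linked pair.  Fix a box `B = (0, b)` in the first row of `T⁻`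
whose label has second entry `1`; let `j` be the number of such boxes weakly
to the left of `B`, `s` the number of second-row boxes of `T⁻` with second
label entry `2` strictly to the left of `B`, `y` the number of first-row boxes
of `T⁻` with second label entry `2` strictly to the left of `B`, and `x` the
number of first-row boxes of `T⁺` with second label entry `2` strictly to the
left of the box of `T⁺` linked to `B`.  Then `t := j - s > 0` and
`|x - y| < t`. -/
theorem statement17 (K cm cp : ℕ) (hK : 1 ≤ K)
    (L : LinkedPair K 2 2 cm cp) (hprim : IsPrimitive L)
    (b : Fin cm) (hb : (L.Tm 0 b).2 = 0) :
    0 < ((Finset.univ.filter fun c : Fin cm =>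
            (L.Tm 0 c).2 = 0 ∧ c ≤ b).card : ℤ) -
        ((Finset.univ.filter fun c : Fin cm =>
            (L.Tm 1 c).2 = 1 ∧ c < b).card : ℤ) ∧
    |((Finset.univ.filter fun c : Fin cp =>
          (L.Tp 0 c).2 = 1 ∧ c < (L.link (0, b)).2).card : ℤ) -
      ((Finset.univ.filter fun c : Fin cm =>
          (L.Tm 0 c).2 = 1 ∧ c < b).card : ℤ)| <
      ((Finset.univ.filter fun c : Fin cm =>
          (L.Tm 0 c).2 = 0 ∧ c ≤ b).card : ℤ) -
        ((Finset.univ.filter fun c : Fin cm =>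
            (L.Tm 1 c).2 = 1 ∧ c < b).card : ℤ) := by
  have hss := hprim.1
  have hadm := adm_of L (colStrict_of hss.2.1) (colStrict_of hss.1)
  have hind : Indec (termExp L 1 1) :=
    fun m1 m2 h1 h2 hm n1 n2 => prim_indec L hprim m1 m2 h1 h2 hm n1 n2
  have hrow : (L.link (0, b)).1 = 0 := by rw [L.link_row, hb]
  have hlab : L.Tp 0 (L.link (0, b)).2 = ((L.Tm 0 b).1, 0) := by
    have := L.link_label 0 b
    rwa [hrow] at this
  have hx := count_before (L.Tp 0) (hss.2.1.1 0) (L.link (0, b)).2 (by rw [hlab])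
  rw [hlab] at hx
  rw [← cum_p L 0 1] at hx
  have hy := count_before (L.Tm 0) (hss.1.1 0) b hb
  rw [← cum_m L 1 0] at hy
  obtain ⟨hj1, hj2, hj3⟩ := count_j (L.Tm 0) (hss.1.1 0) b hb
  rw [← cum_m L 0 0] at hj1 hj2
  have hb0 := count_lt (fun c => (L.Tm 0 c).2) b
  have hb1 := count_lt (fun c => (L.Tm 1 c).2) b
  have hs := count_s (L.Tm 1) (hss.1.1 1) b
  have hsK := count_s_le (L.Tm 1) b
  rw [← cum_m L 1 1] at hsK
  simp only [← cum_m L 1 1, ← cum_m L 0 1] at hs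
  have hp0 := hadm.p0 (L.Tm 0 b).1 (L.Tm 0 b).1.2
  have hm0 := hadm.m0 (L.Tm 0 b).1 (L.Tm 0 b).1.2
  have hV := cum_mono (termExp L 1 1) 1 0 (Nat.le_succ ((L.Tm 0 b).1 : ℕ))
  have hU := cum_mono (termExp L 1 1) 0 1 (Nat.le_succ ((L.Tm 0 b).1 : ℕ))
  have hc := core (termExp L 1 1) hadm hind (L.Tm 0 b).1
  have hlev := exists_level (termExp L 1 1) 1 1
  have hQm := fun a c (h : a ≤ c) => cum_mono (termExp L 1 1) 1 1 (a := a) (b := c) h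
  have hUm := fun a c (h : a ≤ c) => cum_mono (termExp L 1 1) 0 1 (a := a) (b := c) h
  simp only [Nat.succ_eq_add_one] at hV hU
  rw [hx]
  rw [hy] at hb0 ⊢
  generalize (Finset.univ.filter fun c => (L.Tm 0 c).2 = 0 ∧ c ≤ b).card = j at *
  generalize (Finset.univ.filter fun c => (L.Tm 0 c).2 = 0 ∧ c < b).card = j' at *
  generalize (Finset.univ.filter fun c => (L.Tm 1 c).2 = 1 ∧ c < b).card = s at *
  generalize (Finset.univ.filter fun c => (L.Tm 1 c).2 = 0 ∧ c < b).card = s' at *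
  generalize (L.Tm 0 b).1 = α at *
  generalize termExp L 1 1 = m at *
  rw [and_iff_right_of_imp (fun h => lt_of_le_of_lt (abs_nonneg _) h)]
  by_contra hcon
  rcases lt_or_ge (cum m 0 1 α) (cum m 1 0 α) with hY | hY
  · rw [abs_of_neg (by omega)] at hcon
    obtain ⟨l, hl⟩ : ∃ l : ℕ, l + cum m 1 0 α = j + cum m 0 1 α :=
      ⟨j + cum m 0 1 α - cum m 1 0 α, by omega⟩
    obtain ⟨β, hβ1, hβ2⟩ := hlev l (by omega) (by omega)
    have := hs β (by omega)
    exact hc β j l hj1 hj2 hY hl hβ1 hβ2 (by omega)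
  · rw [abs_of_nonneg (by omega)] at hcon
    obtain ⟨l, hl⟩ : ∃ l : ℕ, l + cum m 0 1 α = j + cum m 1 0 α :=
      ⟨j + cum m 1 0 α - cum m 0 1 α, by omega⟩
    obtain ⟨β, hβ1, hβ2⟩ := hlev l (by omega) (by omega)
    have h1 := hs β (by omega)
    have h2 : (α : ℕ) ≤ β := by
      by_contra h
      have := hQm (β + 1) α (by omega)
      omega
    have h3 := hUm α (β + 1) (by omega)
    omega
end QuiverSAGBI
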